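/- Let 0 < p ≤ 1 and λ ∈ [0,1]. The map (A, B) ↦ [B^{1/2}(λ(B^{-1/2}AB^{-1/2})^p + (1-λ)I)^{1/p}B^{1/2}]^{1-p} is jointly concave on pairs of n×n positive definite complex matrices (in the Loewner order), where the outer power (1-p) is again taken by the functional calculus of the (positive definite) inner expression. -/

import Mathlib

open Matrix
open scoped ComplexOrder

/-- Matrix power by a real exponent via the functional calculus
(unitary diagonalization for Hermitian matrices; junk value otherwise). -/
noncomputable def mpow {n : ℕ} (A : Matrix (Fin n) (Fin n) ℂ) (q : ℝ) :
    Matrix (Fin n) (Fin n) ℂ :=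
  if hA : A.IsHermitian then
    (hA.eigenvectorUnitary : Matrix (Fin n) (Fin n) ℂ) *
      Matrix.diagonal (fun i => ((hA.eigenvalues i ^ q : ℝ) : ℂ)) *
      (star (hA.eigenvectorUnitary : Matrix (Fin n) (Fin n) ℂ))
  else 0

/-- The perspective map
`(A,B) ↦ B^{1/2}(λ(B^{-1/2}AB^{-1/2})^p + (1-λ)I)^{1/p}B^{1/2}`. -/
noncomputable def persp2 {n : ℕ} (lam p : ℝ) (A B : Matrix (Fin n) (Fin n) ℂ) :
    Matrix (Fin n) (Fin n) ℂ :=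
  mpow B (1 / 2) *
    mpow (lam • mpow (mpow B (-(1 / 2)) * A * mpow B (-(1 / 2))) p + (1 - lam) • 1)
      (1 / p) *
    mpow B (1 / 2)

/-!
For `0 < p < 1` the power mean `X` of `A` and `B` solves `X = λ (X #ₚ A) + (1 - λ) (X #ₚ B)`, where
`#ₚ` is the weighted geometric mean. It is an integral of parallel sums, and each of these is
monotone and jointly concave as a minimum of functions linear in both arguments; hence so is `#ₚ`.
Since `(c • X) #ₚ A = c ^ (1 - p) • (X #ₚ A)`, iterating `Y ≤ c • X ⟹ Y ≤ c ^ (1 - p) • X` puts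
every subsolution `Y ≤ λ (Y #ₚ A) + (1 - λ) (Y #ₚ B)` below `X`. By joint concavity of `#ₚ`, a
convex combination of solutions is a subsolution for the combined data, so the power mean is
jointly concave, and `x ↦ x ^ r` is operator monotone and operator concave for `0 ≤ r ≤ 1`.
-/

open MeasureTheory Set Filter Topology CFC
open scoped Ring

section ParallelSum

/-- The parallel sum `(a⁻¹ + b⁻¹)⁻¹` of two positive elements, in a form that only inverts
`a + b` and makes sense in any ring. -/
noncomputable def parallelSum {R : Type*} [Ring R] (a b : R) : R :=
  a - a * (a + b)⁻¹ʳ * a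

variable {R : Type*} [Ring R]

lemma mul_parallelSum_mul {s t : R} (hs : IsUnit s) (ht : IsUnit t) (a b : R) :
    s * parallelSum a b * t = parallelSum (s * a * t) (s * b * t) := by
  have inverse_add : (s * a * t + s * b * t)⁻¹ʳ = t⁻¹ʳ * (a + b)⁻¹ʳ * s⁻¹ʳ := by
    rw [← add_mul, ← mul_add, Ring.inverse_mul (.inr ht), Ring.inverse_mul (.inl hs), mul_assoc]
  calc s * parallelSum a b * t
      = s * a * t - s * a * (t * t⁻¹ʳ) * (a + b)⁻¹ʳ * (s⁻¹ʳ * s) * a * t := by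
        rw [Ring.mul_inverse_cancel t ht, Ring.inverse_mul_cancel s hs, parallelSum]
        noncomm_ring
    _ = parallelSum (s * a * t) (s * b * t) := by
        rw [parallelSum, inverse_add]
        noncomm_ring

/-- Completing the square in `z`; the minimizer is `(a + b)⁻¹ʳ * a`. -/
lemma parallelSum_add_star_mul_mul [StarRing R] {a b : R} (ha : IsSelfAdjoint a)
    (hb : IsSelfAdjoint b) (hab : IsUnit (a + b)) (z : R) :
    parallelSum a b + star (z - (a + b)⁻¹ʳ * a) * (a + b) * (z - (a + b)⁻¹ʳ * a) =
      star (1 - z) * a * (1 - z) + star z * b * z := by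
  have star_inverse : star (a + b)⁻¹ʳ = (a + b)⁻¹ʳ := by
    rw [← Ring.inverse_star, (ha.add hb).star_eq]
  have star_shift : star (z - (a + b)⁻¹ʳ * a) * (a + b) = star z * (a + b) - a := by
    rw [star_sub, star_mul, ha.star_eq, star_inverse, sub_mul, mul_assoc a,
      Ring.inverse_mul_cancel _ hab, mul_one]
  have mul_shift : (a + b) * ((a + b)⁻¹ʳ * a) = a := by
    rw [← mul_assoc, Ring.mul_inverse_cancel _ hab, one_mul]
  rw [star_shift, mul_sub, sub_mul _ _ ((a + b)⁻¹ʳ * a), mul_assoc (star z), mul_shift,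
    parallelSum, star_sub, star_one]
  noncomm_ring

variable {A : Type*} [CStarAlgebra A] [PartialOrder A] [StarOrderedRing A]

lemma isLeast_parallelSum {a b : A} (ha : IsSelfAdjoint a) (hab : IsStrictlyPositive (a + b)) :
    IsLeast (range fun z : A => star (1 - z) * a * (1 - z) + star z * b * z)
      (parallelSum a b) := by
  have hb : IsSelfAdjoint b := by simpa using hab.isSelfAdjoint.sub ha
  have square := parallelSum_add_star_mul_mul ha hb hab.isUnit
  constructor
  · exact ⟨(a + b)⁻¹ʳ * a, by simp only [← square, sub_self, mul_zero, add_zero]⟩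
  · rintro _ ⟨z, rfl⟩
    beta_reduce
    rw [← square]
    exact le_add_of_nonneg_right (star_left_conjugate_nonneg hab.nonneg _)

lemma monotoneOn_parallelSum {b : A} (hb : IsStrictlyPositive b) :
    MonotoneOn (fun a => parallelSum a b) (Ici 0) := by
  intro a ha a' ha' h
  obtain ⟨⟨z, hz⟩, -⟩ := isLeast_parallelSum (IsSelfAdjoint.of_nonneg ha') (hb.nonneg_add ha')
  calc parallelSum a b
      ≤ star (1 - z) * a * (1 - z) + star z * b * z :=
        (isLeast_parallelSum (IsSelfAdjoint.of_nonneg ha) (hb.nonneg_add ha)).2 ⟨z, rfl⟩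
    _ ≤ star (1 - z) * a' * (1 - z) + star z * b * z := by
        gcongr
        exact star_left_conjugate_le_conjugate h _
    _ = parallelSum a' b := hz

lemma convex_isStrictlyPositive : Convex ℝ {a : A | IsStrictlyPositive a} := by
  grind [convex_iff_forall_pos]

lemma convex_isStrictlyPositive_prod :
    Convex ℝ ({a : A | IsStrictlyPositive a} ×ˢ {b : A | IsStrictlyPositive b}) :=
  convex_isStrictlyPositive.prod convex_isStrictlyPositive

lemma concaveOn_parallelSum :
    ConcaveOn ℝ ({a : A | IsStrictlyPositive a} ×ˢ {b : A | IsStrictlyPositive b})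
      fun x => parallelSum x.1 x.2 := by
  refine ⟨convex_isStrictlyPositive_prod, ?_⟩
  have isLeast {x : A × A}
      (hx : x ∈ {a : A | IsStrictlyPositive a} ×ˢ {b : A | IsStrictlyPositive b}) :=
    isLeast_parallelSum hx.1.isSelfAdjoint (hx.1.add_nonneg hx.2.nonneg)
  intro x hx y hy α β hα hβ hαβ
  obtain ⟨⟨z, hz⟩, -⟩ := isLeast (convex_isStrictlyPositive_prod hx hy hα hβ hαβ)
  calc α • parallelSum x.1 x.2 + β • parallelSum y.1 y.2
      ≤ α • (star (1 - z) * x.1 * (1 - z) + star z * x.2 * z)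
          + β • (star (1 - z) * y.1 * (1 - z) + star z * y.2 * z) := by
        gcongr
        · exact (isLeast hx).2 ⟨z, rfl⟩
        · exact (isLeast hy).2 ⟨z, rfl⟩
    _ = star (1 - z) * (α • x + β • y).1 * (1 - z) + star z * (α • x + β • y).2 * z := by
        simp only [Prod.fst_add, Prod.snd_add, Prod.smul_fst, Prod.smul_snd, mul_add, add_mul,
          smul_mul_assoc, mul_smul_comm, smul_add]
        abel
    _ = parallelSum (α • x + β • y).1 (α • x + β • y).2 := hz

end ParallelSum

section Rpow

variable {A : Type*} [CStarAlgebra A] [PartialOrder A] [StarOrderedRing A]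

lemma rpow_eq_exp_smul_log {a : A} (ha : IsStrictlyPositive a) (r : ℝ) :
    a ^ r = NormedSpace.exp (r • log a) := by
  have pos : ∀ x ∈ spectrum ℝ a, 0 < x := fun x hx => ha.spectrum_pos hx
  have hlog : ContinuousOn Real.log (spectrum ℝ a) :=
    Real.continuousOn_log.mono fun x hx => (pos x hx).ne'
  rw [rpow_eq_cfc_real ha.nonneg, log, ← cfc_smul r _ a hlog, ← real_exp_eq_normedSpace_exp,
    ← cfc_comp' Real.exp _ a]
  exact cfc_congr fun x hx => by simp [Real.rpow_def_of_pos (pos x hx), mul_comm]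

lemma commute_rpow_left {a b : A} (ha : 0 ≤ a) (h : Commute a b) (r : ℝ) :
    Commute (a ^ r) b := by
  rw [rpow_eq_cfc_real ha]
  exact h.cfc_real _

lemma mul_rpow_of_commute {a b : A} (ha : IsStrictlyPositive a) (hb : IsStrictlyPositive b)
    (h : Commute a b) (r : ℝ) : (a * b) ^ r = a ^ r * b ^ r := by
  let _ : NormedAlgebra ℚ A := .restrictScalars ℚ ℝ A
  have hlog : Commute (log a) (log b) := ((h.cfc_real _).symm.cfc_real _).symm
  have log_mul : log (a * b) = log a + log b := by
    rw [← log_exp (log a + log b) (IsSelfAdjoint.log.add .log),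
      NormedSpace.exp_add_of_commute hlog, exp_log a, exp_log b]
  rw [rpow_eq_exp_smul_log ((ha.commute_iff hb).1 h), log_mul, smul_add,
    NormedSpace.exp_add_of_commute ((hlog.smul_left r).smul_right r),
    ← rpow_eq_exp_smul_log ha, ← rpow_eq_exp_smul_log hb]

lemma smul_rpow {a : A} (ha : IsStrictlyPositive a) {c : ℝ} (hc : 0 < c) (r : ℝ) :
    (c • a) ^ r = c ^ r • a ^ r := by
  have pos : ∀ x ∈ spectrum ℝ a, 0 < x := fun x hx => ha.spectrum_pos hx
  have hrpow : ContinuousOn (fun x : ℝ => x ^ r) (spectrum ℝ a) :=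
    continuousOn_id.rpow_const fun x hx => .inl (pos x hx).ne'
  calc (c • a) ^ r
      = cfc (fun x : ℝ => c * x) a ^ r := by rw [cfc_const_mul c _ a, cfc_id' ℝ a]
    _ = cfc (fun x : ℝ => (c * x) ^ r) a := cfc_rpow fun x hx => mul_pos hc (pos x hx)
    _ = cfc (fun x : ℝ => c ^ r * x ^ r) a :=
        cfc_congr fun x hx => Real.mul_rpow hc.le (pos x hx).le
    _ = c ^ r • a ^ r := by rw [cfc_const_mul _ _ a hrpow, rpow_eq_cfc_real ha.nonneg]

lemma conjSqrt_eq_rpow_mul_rpow (a b : A) :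
    conjSqrt a b = a ^ (1 / 2 : ℝ) * b * a ^ (1 / 2 : ℝ) := by
  rw [conjSqrt_apply, sqrt_eq_rpow]

lemma conjSqrt_inverse_eq_rpow_mul_rpow {a : A} (ha : IsStrictlyPositive a) (b : A) :
    conjSqrt a⁻¹ʳ b = a ^ (-(1 / 2) : ℝ) * b * a ^ (-(1 / 2) : ℝ) := by
  rw [conjSqrt_eq_rpow_mul_rpow, inverse_eq_rpow_neg_one,
    rpow_rpow a _ _ (by norm_num), neg_one_mul]

lemma isStrictlyPositive_conjSqrt_inverse {a b : A} (ha : IsStrictlyPositive a)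
    (hb : IsStrictlyPositive b) : IsStrictlyPositive (conjSqrt a⁻¹ʳ b) :=
  (isStrictlyPositive_conjSqrt_iff _ _ ha.ringInverse).2 hb

lemma conjSqrt_smul {a : A} (ha : IsStrictlyPositive a) {c : ℝ} (hc : 0 < c) (b : A) :
    conjSqrt (c • a) b = c • conjSqrt a b := by
  rw [conjSqrt_eq_rpow_mul_rpow, conjSqrt_eq_rpow_mul_rpow, smul_rpow ha hc, smul_mul_assoc,
    smul_mul_smul_comm, ← Real.rpow_add hc, add_halves, Real.rpow_one]

end Rpow

section WeightedGeomMean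

variable {A : Type*} [CStarAlgebra A] [PartialOrder A] [StarOrderedRing A]

lemma cfcₙ_rpowIntegrand₀₁_eq_smul_parallelSum {p t : ℝ} (hp : p ∈ Ioo (0 : ℝ) 1) (ht : 0 < t)
    {a : A} (ha : 0 ≤ a) :
    cfcₙ (Real.rpowIntegrand₀₁ p t) a = t ^ (p - 2) • parallelSum (t • 1) a := by
  have add_ne_zero : ∀ x ∈ quasispectrum ℝ a, t + x ≠ 0 := fun x hx =>
    (add_pos_of_pos_of_nonneg ht (quasispectrum_nonneg_of_nonneg a ha x hx)).ne'
  have hinv : ContinuousOn (fun x => (t + x)⁻¹) (quasispectrum ℝ a) :=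
    ContinuousOn.inv₀ (by fun_prop) add_ne_zero
  have hsub : ContinuousOn (fun x => t - t * t * (t + x)⁻¹) (quasispectrum ℝ a) := by fun_prop
  have subset := spectrum_subset_quasispectrum ℝ a
  have integrand_eq :
      Real.rpowIntegrand₀₁ p t = fun x => t ^ (p - 2) * (t - t * t * (t + x)⁻¹) := by
    have rpow_sub_one : t ^ (p - 1) = t ^ (p - 2) * t := by
      rw [← Real.rpow_add_one ht.ne']; ring_nf
    have rpow_eq : t ^ p = t ^ (p - 2) * t * t := by
      rw [← rpow_sub_one, ← Real.rpow_add_one ht.ne', sub_add_cancel]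
    rw [Real.rpowIntegrand₀₁_eq_sub hp.2.ne ht, rpow_eq, rpow_sub_one]
    ring_nf
  calc cfcₙ (Real.rpowIntegrand₀₁ p t) a
      = cfc (fun x => t ^ (p - 2) * (t - t * t * (t + x)⁻¹)) a := by
        rw [cfcₙ_eq_cfc (hf := ?_) (hf0 := Real.rpowIntegrand₀₁_zero_right), integrand_eq]
        exact integrand_eq ▸ .const_mul hsub _
    _ = t ^ (p - 2) • (algebraMap ℝ A t - (t * t) • (algebraMap ℝ A t + a)⁻¹ʳ) := by
        rw [cfc_const_mul _ _ a (hsub.mono subset),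
          cfc_sub _ _ a (by fun_prop) (.const_mul (hinv.mono subset) _),
          cfc_const _ a, cfc_const_mul _ _ a (hinv.mono subset),
          cfc_inv _ a fun x hx => add_ne_zero x (subset hx),
          cfc_const_add t _ a, cfc_id' ℝ a]
    _ = t ^ (p - 2) • parallelSum (t • 1) a := by
        simp [parallelSum, Algebra.algebraMap_eq_smul_one, smul_smul]

variable (A) in
lemma exists_measure_rpow_eq_integral_parallelSum {p : ℝ} (hp : p ∈ Ioo (0 : ℝ) 1) :
    ∃ μ : Measure ℝ, ∀ a : A, 0 ≤ a →
      IntegrableOn (fun t : ℝ => t ^ (p - 2) • parallelSum (t • 1) a) (Ioi 0) μ ∧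
        a ^ p = ∫ t in Ioi 0, t ^ (p - 2) • parallelSum (t • 1) a ∂μ := by
  lift p to NNReal using hp.1.le
  have hp' : p ∈ Ioo 0 1 := hp
  obtain ⟨μ, hμ⟩ := exists_measure_nnrpow_eq_integral_cfcₙ_rpowIntegrand₀₁ A hp'
  refine ⟨μ, fun a ha => ?_⟩
  have integrand_eq : EqOn (fun t => cfcₙ (Real.rpowIntegrand₀₁ p t) a)
      (fun t => t ^ ((p : ℝ) - 2) • parallelSum (t • 1) a) (Ioi 0) :=
    fun t ht => cfcₙ_rpowIntegrand₀₁_eq_smul_parallelSum hp ht ha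
  rw [← integrableOn_congr_fun integrand_eq measurableSet_Ioi,
    ← setIntegral_congr_fun measurableSet_Ioi integrand_eq, ← nnrpow_eq_rpow hp'.1]
  exact hμ a ha

/-- The weighted geometric mean `a #ₚ b = a^{1/2} (a^{-1/2} b a^{-1/2})^p a^{1/2}`. -/
noncomputable def weightedGeomMean (p : ℝ) (a b : A) : A :=
  conjSqrt a (conjSqrt a⁻¹ʳ b ^ p)

variable (A) in
lemma exists_measure_weightedGeomMean_eq_integral {p : ℝ} (hp : p ∈ Ioo (0 : ℝ) 1) :
    ∃ μ : Measure ℝ, ∀ a b : A, IsStrictlyPositive a → IsStrictlyPositive b →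
      IntegrableOn (fun t : ℝ => t ^ (p - 2) • parallelSum (t • a) b) (Ioi 0) μ ∧
        weightedGeomMean p a b = ∫ t in Ioi 0, t ^ (p - 2) • parallelSum (t • a) b ∂μ := by
  obtain ⟨μ, hμ⟩ := exists_measure_rpow_eq_integral_parallelSum A hp
  refine ⟨μ, fun a b ha hb => ?_⟩
  obtain ⟨integrable, rpow_eq⟩ := hμ (conjSqrt a⁻¹ʳ b)
    (isStrictlyPositive_conjSqrt_inverse ha hb).nonneg
  have conj_integrand (t : ℝ) :
      conjSqrt a (t ^ (p - 2) • parallelSum (t • 1) (conjSqrt a⁻¹ʳ b)) =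
        t ^ (p - 2) • parallelSum (t • a) b := by
    have hs : IsUnit (sqrt a) := ha.sqrt.isUnit
    rw [map_smul, conjSqrt_apply, mul_parallelSum_mul hs hs, ← conjSqrt_apply, ← conjSqrt_apply,
      map_smul, conjSqrt_one a, conjSqrt_conjSqrt_ringInverse a]
  simp only [← conj_integrand]
  exact ⟨(conjSqrt a).integrable_comp integrable, by
    rw [(conjSqrt a).integral_comp_comm integrable, ← rpow_eq, weightedGeomMean]⟩

lemma monotoneOn_weightedGeomMean {p : ℝ} (hp : p ∈ Ioo (0 : ℝ) 1) {b : A}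
    (hb : IsStrictlyPositive b) :
    MonotoneOn (fun a => weightedGeomMean p a b) {a | IsStrictlyPositive a} := by
  obtain ⟨μ, hμ⟩ := exists_measure_weightedGeomMean_eq_integral A hp
  refine MonotoneOn.congr (integral_monotoneOn_of_integrand_ae (μ := μ.restrict (Ioi 0)) ?_
    fun a ha => (hμ a b ha hb).1) fun a ha => (hμ a b ha hb).2.symm
  filter_upwards [ae_restrict_mem measurableSet_Ioi] with t (ht : 0 < t) a ha a' ha' h
  exact smul_le_smul_of_nonneg_left
    (monotoneOn_parallelSum hb (ha.smul ht).nonneg (ha'.smul ht).nonneg (by gcongr)) (by positivity)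

lemma concaveOn_weightedGeomMean {p : ℝ} (hp : p ∈ Ioo (0 : ℝ) 1) :
    ConcaveOn ℝ ({a : A | IsStrictlyPositive a} ×ˢ {b : A | IsStrictlyPositive b})
      fun x => weightedGeomMean p x.1 x.2 := by
  obtain ⟨μ, hμ⟩ := exists_measure_weightedGeomMean_eq_integral A hp
  refine ConcaveOn.congr (integral_concaveOn_of_integrand_ae (μ := μ.restrict (Ioi 0))
    convex_isStrictlyPositive_prod ?_ fun x hx => (hμ x.1 x.2 hx.1 hx.2).1)
    fun x hx => (hμ x.1 x.2 hx.1 hx.2).2.symm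
  filter_upwards [ae_restrict_mem measurableSet_Ioi] with t (ht : 0 < t)
  refine ConcaveOn.smul (by positivity) ⟨convex_isStrictlyPositive_prod,
    fun x hx y hy α β hα hβ hαβ => ?_⟩
  have := concaveOn_parallelSum.2 (x := (t • x.1, x.2)) (y := (t • y.1, y.2))
    ⟨hx.1.smul ht, hx.2⟩ ⟨hy.1.smul ht, hy.2⟩ hα hβ hαβ
  simpa [smul_comm t] using this

lemma mul_weightedGeomMean_mul_star {p : ℝ} (hp : p ∈ Ioo (0 : ℝ) 1) {s a b : A} (hs : IsUnit s)
    (ha : IsStrictlyPositive a) (hb : IsStrictlyPositive b) :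
    s * weightedGeomMean p a b * star s =
      weightedGeomMean p (s * a * star s) (s * b * star s) := by
  obtain ⟨μ, hμ⟩ := exists_measure_weightedGeomMean_eq_integral A hp
  obtain ⟨integrable, mean_eq⟩ := hμ a b ha hb
  obtain ⟨-, mean_conj_eq⟩ := hμ (s * a * star s) (s * b * star s)
    (hs.isStrictlyPositive_star_right_conjugate_iff.2 ha)
    (hs.isStrictlyPositive_star_right_conjugate_iff.2 hb)
  let conj : A →L[ℝ] A := .mulLeftRight ℝ A s (star s)
  have conj_integrand (t : ℝ) : conj (t ^ (p - 2) • parallelSum (t • a) b) =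
      t ^ (p - 2) • parallelSum (t • (s * a * star s)) (s * b * star s) := by
    simp [conj, mul_parallelSum_mul hs hs.star]
  calc s * weightedGeomMean p a b * star s
      = conj (∫ t in Ioi 0, t ^ (p - 2) • parallelSum (t • a) b ∂μ) := by rw [mean_eq]; rfl
    _ = weightedGeomMean p (s * a * star s) (s * b * star s) := by
      rw [mean_conj_eq, ← conj.integral_comp_comm integrable]
      simp only [conj_integrand]

lemma conjSqrt_weightedGeomMean {p : ℝ} (hp : p ∈ Ioo (0 : ℝ) 1) {a b c : A}
    (ha : IsStrictlyPositive a) (hb : IsStrictlyPositive b) (hc : IsStrictlyPositive c) :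
    conjSqrt c (weightedGeomMean p a b) = weightedGeomMean p (conjSqrt c a) (conjSqrt c b) := by
  simpa only [conjSqrt_apply, hc.sqrt.isSelfAdjoint.star_eq] using
    mul_weightedGeomMean_mul_star hp hc.sqrt.isUnit ha hb

lemma weightedGeomMean_of_commute {a b : A} (ha : IsStrictlyPositive a)
    (hb : IsStrictlyPositive b) (h : Commute a b) (p : ℝ) :
    weightedGeomMean p a b = a ^ (1 - p) * b ^ p := by
  have hneg : Commute (a ^ (-(1 / 2) : ℝ)) b := commute_rpow_left ha.nonneg h _
  have hinv : Commute (a ^ (-1 : ℝ)) b := commute_rpow_left ha.nonneg h _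
  have hpow : Commute (a ^ (1 / 2 : ℝ)) (b ^ p) :=
    commute_rpow_left ha.nonneg (commute_rpow_left hb.nonneg h.symm p).symm _
  calc weightedGeomMean p a b
      = a ^ (1 / 2 : ℝ) * (a ^ (-(1 / 2) : ℝ) * a ^ (-(1 / 2) : ℝ) * b) ^ p
          * a ^ (1 / 2 : ℝ) := by
        rw [weightedGeomMean, conjSqrt_eq_rpow_mul_rpow, conjSqrt_inverse_eq_rpow_mul_rpow ha,
          mul_assoc _ b, ← hneg.eq, ← mul_assoc]
    _ = a ^ (1 / 2 : ℝ) * (a ^ (-1 : ℝ) * b) ^ p * a ^ (1 / 2 : ℝ) := by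
        rw [← rpow_add ha.isUnit]
        norm_num
    _ = a ^ (1 / 2 : ℝ) * a ^ (-p) * a ^ (1 / 2 : ℝ) * b ^ p := by
        rw [mul_rpow_of_commute (.rpow a _ ha) hb hinv, rpow_rpow a _ _ (by norm_num),
          neg_one_mul, ← mul_assoc, mul_assoc _ (b ^ p), ← hpow.eq, ← mul_assoc]
    _ = a ^ (1 - p) * b ^ p := by
        rw [← rpow_add ha.isUnit, ← rpow_add ha.isUnit]
        ring_nf

lemma weightedGeomMean_smul_left {a b : A} (ha : IsStrictlyPositive a)
    (hb : IsStrictlyPositive b) {c : ℝ} (hc : 0 < c) (p : ℝ) :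
    weightedGeomMean p (c • a) b = c ^ (1 - p) • weightedGeomMean p a b := by
  have hm := isStrictlyPositive_conjSqrt_inverse ha hb
  have inverse_smul : (c • a)⁻¹ʳ = c⁻¹ • a⁻¹ʳ := by
    rw [inverse_eq_rpow_neg_one, inverse_eq_rpow_neg_one, smul_rpow ha hc, Real.rpow_neg_one]
  calc weightedGeomMean p (c • a) b
      = c • c⁻¹ ^ p • weightedGeomMean p a b := by
        rw [weightedGeomMean, conjSqrt_smul ha hc, inverse_smul,
          conjSqrt_smul ha.ringInverse (inv_pos.2 hc), smul_rpow hm (inv_pos.2 hc), map_smul,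
          weightedGeomMean]
    _ = c ^ (1 - p) • weightedGeomMean p a b := by
        rw [smul_smul, Real.inv_rpow hc.le, Real.rpow_sub hc, Real.rpow_one, div_eq_mul_inv]

end WeightedGeomMean

section PowerMean

variable {A : Type*} [CStarAlgebra A] [PartialOrder A] [StarOrderedRing A]

/-- The weighted power mean `b^{1/2} (λ (b^{-1/2} a b^{-1/2})^p + (1 - λ))^{1/p} b^{1/2}`, which
is `persp2` for elements of a C⋆-algebra. -/
noncomputable def powerMean (lam p : ℝ) (a b : A) : A :=
  conjSqrt b ((lam • conjSqrt b⁻¹ʳ a ^ p + (1 - lam) • 1) ^ (1 / p))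

variable {lam p : ℝ} {a b : A}

lemma isStrictlyPositive_smul_rpow_add_smul_one (hlam : lam ∈ Icc (0 : ℝ) 1) (p : ℝ)
    (ha : IsStrictlyPositive a) : IsStrictlyPositive (lam • a ^ p + (1 - lam) • 1) :=
  convex_isStrictlyPositive (.rpow a p ha) isStrictlyPositive_one hlam.1 (sub_nonneg.2 hlam.2)
    (add_sub_cancel lam 1)

lemma isStrictlyPositive_powerMean (hlam : lam ∈ Icc (0 : ℝ) 1) (p : ℝ)
    (ha : IsStrictlyPositive a) (hb : IsStrictlyPositive b) :
    IsStrictlyPositive (powerMean lam p a b) :=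
  (isStrictlyPositive_conjSqrt_iff _ _ hb).2 <| .rpow _ _ <|
    isStrictlyPositive_smul_rpow_add_smul_one hlam p (isStrictlyPositive_conjSqrt_inverse hb ha)

lemma powerMean_one (hlam : lam ∈ Icc (0 : ℝ) 1) (ha : IsStrictlyPositive a)
    (hb : IsStrictlyPositive b) : powerMean lam 1 a b = lam • a + (1 - lam) • b := by
  have hm := isStrictlyPositive_conjSqrt_inverse hb ha
  rw [powerMean, div_one, rpow_one _ (isStrictlyPositive_smul_rpow_add_smul_one hlam 1 hm).nonneg,
    rpow_one _ hm.nonneg, map_add, map_smul, map_smul, conjSqrt_conjSqrt_ringInverse b,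
    conjSqrt_one b]

lemma smul_weightedGeomMean_add_smul_weightedGeomMean_one (hlam : lam ∈ Icc (0 : ℝ) 1)
    (hp : p ≠ 0) (ha : IsStrictlyPositive a) {x : A}
    (hx : x = (lam • a ^ p + (1 - lam) • 1) ^ (1 / p)) :
    lam • weightedGeomMean p x a + (1 - lam) • weightedGeomMean p x 1 = x := by
  set n := lam • a ^ p + (1 - lam) • 1
  have hn_pos : IsStrictlyPositive n := isStrictlyPositive_smul_rpow_add_smul_one hlam p ha
  have hx_pos : IsStrictlyPositive x := hx ▸ .rpow _ _ hn_pos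
  have commute_n : Commute n a :=
    ((commute_rpow_left ha.nonneg (.refl a) p).smul_left lam).add_left
      ((Commute.one_left a).smul_left _)
  have commute_x : Commute x a := hx ▸ commute_rpow_left hn_pos.nonneg commute_n _
  calc lam • weightedGeomMean p x a + (1 - lam) • weightedGeomMean p x 1
      = x ^ (1 - p) * n := by
        rw [weightedGeomMean_of_commute hx_pos ha commute_x,
          weightedGeomMean_of_commute hx_pos isStrictlyPositive_one (.one_right x), one_rpow,
          ← mul_smul_comm, ← mul_smul_comm, ← mul_add]
    _ = n ^ (1 / p * (1 - p) + 1) := by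
        rw [rpow_add hn_pos.isUnit, ← rpow_rpow n _ _ (one_div_ne_zero hp), ← hx,
          rpow_one n hn_pos.nonneg]
    _ = x := by
        rw [hx]
        congr 1
        field_simp
        ring

lemma smul_weightedGeomMean_powerMean_add (hp : p ∈ Ioo (0 : ℝ) 1) (hlam : lam ∈ Icc (0 : ℝ) 1)
    (ha : IsStrictlyPositive a) (hb : IsStrictlyPositive b) :
    lam • weightedGeomMean p (powerMean lam p a b) a +
      (1 - lam) • weightedGeomMean p (powerMean lam p a b) b = powerMean lam p a b := by
  have hm := isStrictlyPositive_conjSqrt_inverse hb ha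
  set x := (lam • conjSqrt b⁻¹ʳ a ^ p + (1 - lam) • 1) ^ (1 / p) with hx
  have hx_pos : IsStrictlyPositive x :=
    .rpow _ _ (isStrictlyPositive_smul_rpow_add_smul_one hlam p hm)
  calc lam • weightedGeomMean p (conjSqrt b x) a + (1 - lam) • weightedGeomMean p (conjSqrt b x) b
      = conjSqrt b (lam • weightedGeomMean p x (conjSqrt b⁻¹ʳ a) +
          (1 - lam) • weightedGeomMean p x 1) := by
        rw [map_add, map_smul, map_smul, conjSqrt_weightedGeomMean hp hx_pos hm hb,
          conjSqrt_weightedGeomMean hp hx_pos isStrictlyPositive_one hb,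
          conjSqrt_conjSqrt_ringInverse b, conjSqrt_one b]
    _ = conjSqrt b x := by
        rw [smul_weightedGeomMean_add_smul_weightedGeomMean_one hlam hp.1.ne' hm hx]

lemma exists_pos_le_smul (ha : IsSelfAdjoint a) (hb : IsStrictlyPositive b) :
    ∃ c : ℝ, 0 < c ∧ a ≤ c • b := by
  cases subsingleton_or_nontrivial A
  · exact ⟨1, one_pos, (Subsingleton.elim _ _).le⟩
  obtain ⟨r, hr, hrb⟩ : ∃ r : ℝ, 0 < r ∧ algebraMap ℝ A r ≤ b :=
    (exists_pos_algebraMap_le_iff hb.isSelfAdjoint).2 fun x hx => hb.spectrum_pos hx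
  refine ⟨(‖a‖ + 1) / r, by positivity, ?_⟩
  calc a ≤ algebraMap ℝ A ‖a‖ := ha.le_algebraMap_norm_self
    _ ≤ algebraMap ℝ A (‖a‖ + 1) := algebraMap_mono A (by simp)
    _ = ((‖a‖ + 1) / r) • algebraMap ℝ A r := by
        rw [Algebra.smul_def, ← map_mul, div_mul_cancel₀ _ hr.ne']
    _ ≤ ((‖a‖ + 1) / r) • b := by gcongr

lemma le_rpow_smul_powerMean_of_le_smul (hp : p ∈ Ioo (0 : ℝ) 1) (hlam : lam ∈ Icc (0 : ℝ) 1)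
    (ha : IsStrictlyPositive a) (hb : IsStrictlyPositive b) {x : A} (hx : IsStrictlyPositive x)
    (h : x ≤ lam • weightedGeomMean p x a + (1 - lam) • weightedGeomMean p x b)
    {c : ℝ} (hc : 0 < c) (hxc : x ≤ c • powerMean lam p a b) :
    x ≤ c ^ (1 - p) • powerMean lam p a b := by
  set y := powerMean lam p a b
  have hy : IsStrictlyPositive y := isStrictlyPositive_powerMean hlam p ha hb
  have mean_le {d : A} (hd : IsStrictlyPositive d) :
      weightedGeomMean p x d ≤ c ^ (1 - p) • weightedGeomMean p y d := by
    rw [← weightedGeomMean_smul_left hy hd hc]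
    exact monotoneOn_weightedGeomMean hp hd hx (hy.smul hc) hxc
  calc x ≤ lam • weightedGeomMean p x a + (1 - lam) • weightedGeomMean p x b := h
    _ ≤ lam • c ^ (1 - p) • weightedGeomMean p y a
          + (1 - lam) • c ^ (1 - p) • weightedGeomMean p y b :=
        add_le_add (smul_le_smul_of_nonneg_left (mean_le ha) hlam.1)
          (smul_le_smul_of_nonneg_left (mean_le hb) (sub_nonneg.2 hlam.2))
    _ = c ^ (1 - p) • y := by
        rw [smul_comm lam, smul_comm (1 - lam), ← smul_add,
          smul_weightedGeomMean_powerMean_add hp hlam ha hb]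

lemma le_powerMean_of_le_weightedGeomMean (hp : p ∈ Ioo (0 : ℝ) 1) (hlam : lam ∈ Icc (0 : ℝ) 1)
    (ha : IsStrictlyPositive a) (hb : IsStrictlyPositive b) {x : A} (hx : IsStrictlyPositive x)
    (h : x ≤ lam • weightedGeomMean p x a + (1 - lam) • weightedGeomMean p x b) :
    x ≤ powerMean lam p a b := by
  obtain ⟨c, hc, hxc⟩ :=
    exists_pos_le_smul hx.isSelfAdjoint (isStrictlyPositive_powerMean hlam p ha hb)
  have le_iterate (k : ℕ) : x ≤ c ^ ((1 - p) ^ k) • powerMean lam p a b := by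
    induction k with
    | zero => simpa using hxc
    | succ k ih =>
      rw [pow_succ, Real.rpow_mul hc.le]
      exact le_rpow_smul_powerMean_of_le_smul hp hlam ha hb hx h (Real.rpow_pos_of_pos hc _) ih
  have tendsto_pow : Tendsto (fun k : ℕ => (1 - p) ^ k) atTop (𝓝 0) :=
    tendsto_pow_atTop_nhds_zero_of_lt_one (sub_nonneg.2 hp.2.le) (sub_lt_self 1 hp.1)
  have tendsto_iterate : Tendsto (fun k : ℕ => c ^ ((1 - p) ^ k) • powerMean lam p a b) atTop
      (𝓝 (c ^ (0 : ℝ) • powerMean lam p a b)) :=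
    ((Real.continuousAt_const_rpow hc.ne').tendsto.comp tendsto_pow).smul_const _
  rw [Real.rpow_zero, one_smul] at tendsto_iterate
  exact ge_of_tendsto' tendsto_iterate le_iterate

lemma concaveOn_powerMean (hp : p ∈ Ioc (0 : ℝ) 1) (hlam : lam ∈ Icc (0 : ℝ) 1) :
    ConcaveOn ℝ ({a : A | IsStrictlyPositive a} ×ˢ {b : A | IsStrictlyPositive b})
      fun x => powerMean lam p x.1 x.2 := by
  refine ⟨convex_isStrictlyPositive_prod, fun x hx y hy α β hα hβ hαβ => ?_⟩
  have hxy := convex_isStrictlyPositive_prod hx hy hα hβ hαβ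
  obtain rfl | hp1 := hp.2.eq_or_lt
  · beta_reduce
    rw [powerMean_one hlam hx.1 hx.2, powerMean_one hlam hy.1 hy.2,
      powerMean_one hlam hxy.1 hxy.2, Prod.fst_add, Prod.snd_add]
    exact le_of_eq (by simp only [Prod.smul_fst, Prod.smul_snd]; module)
  have hp : p ∈ Ioo (0 : ℝ) 1 := ⟨hp.1, hp1⟩
  have hu := isStrictlyPositive_powerMean hlam p hx.1 hx.2
  have hv := isStrictlyPositive_powerMean hlam p hy.1 hy.2
  have concave := (concaveOn_weightedGeomMean (A := A) hp).2
  set u := powerMean lam p x.1 x.2 with hu_def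
  set v := powerMean lam p y.1 y.2 with hv_def
  refine le_powerMean_of_le_weightedGeomMean hp hlam hxy.1 hxy.2
    (convex_isStrictlyPositive hu hv hα hβ hαβ) ?_
  calc α • u + β • v
      = lam • (α • weightedGeomMean p u x.1 + β • weightedGeomMean p v y.1) +
          (1 - lam) • (α • weightedGeomMean p u x.2 + β • weightedGeomMean p v y.2) := by
        nth_rw 1 [hu_def, hv_def, ← smul_weightedGeomMean_powerMean_add hp hlam hx.1 hx.2,
          ← smul_weightedGeomMean_powerMean_add hp hlam hy.1 hy.2]
        module
    _ ≤ lam • weightedGeomMean p (α • u + β • v) (α • x + β • y).1 +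
          (1 - lam) • weightedGeomMean p (α • u + β • v) (α • x + β • y).2 :=
        add_le_add
          (smul_le_smul_of_nonneg_left
            (concave (x := (u, x.1)) (y := (v, y.1)) ⟨hu, hx.1⟩ ⟨hv, hy.1⟩ hα hβ hαβ) hlam.1)
          (smul_le_smul_of_nonneg_left
            (concave (x := (u, x.2)) (y := (v, y.2)) ⟨hu, hx.2⟩ ⟨hv, hy.2⟩ hα hβ hαβ)
            (sub_nonneg.2 hlam.2))

theorem stmt16_general (hp : p ∈ Ioc (0 : ℝ) 1) (hlam : lam ∈ Icc (0 : ℝ) 1) {r : ℝ}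
    (hr : r ∈ Icc (0 : ℝ) 1) :
    ConcaveOn ℝ ({a : A | IsStrictlyPositive a} ×ˢ {b : A | IsStrictlyPositive b})
      fun x => powerMean lam p x.1 x.2 ^ r := by
  refine ⟨convex_isStrictlyPositive_prod, fun x hx y hy α β hα hβ hαβ => ?_⟩
  calc α • powerMean lam p x.1 x.2 ^ r + β • powerMean lam p y.1 y.2 ^ r
      ≤ (α • powerMean lam p x.1 x.2 + β • powerMean lam p y.1 y.2) ^ r :=
        (concaveOn_rpow hr).2 (isStrictlyPositive_powerMean hlam p hx.1 hx.2).nonneg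
          (isStrictlyPositive_powerMean hlam p hy.1 hy.2).nonneg hα hβ hαβ
    _ ≤ powerMean lam p (α • x + β • y).1 (α • x + β • y).2 ^ r :=
        rpow_le_rpow hr ((concaveOn_powerMean hp hlam).2 hx hy hα hβ hαβ)

end PowerMean

section MatrixPower

open scoped MatrixOrder Matrix.Norms.L2Operator

variable {n : ℕ}

lemma mpow_eq_rpow {M : Matrix (Fin n) (Fin n) ℂ} (hM : 0 ≤ M) (q : ℝ) : mpow M q = M ^ q := by
  have hM' : M.IsHermitian := IsSelfAdjoint.of_nonneg hM
  rw [rpow_eq_cfc_real hM, hM'.cfc_eq, IsHermitian.cfc, mpow, dif_pos hM']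
  rfl

lemma persp2_eq_powerMean {lam : ℝ} (hlam : lam ∈ Icc (0 : ℝ) 1) (p : ℝ)
    {M N : Matrix (Fin n) (Fin n) ℂ} (hM : IsStrictlyPositive M) (hN : IsStrictlyPositive N) :
    persp2 lam p M N = powerMean lam p M N := by
  have hm := isStrictlyPositive_conjSqrt_inverse hN hM
  have hn := isStrictlyPositive_smul_rpow_add_smul_one hlam p hm
  rw [powerMean, conjSqrt_eq_rpow_mul_rpow, persp2, mpow_eq_rpow hN.nonneg,
    mpow_eq_rpow hN.nonneg, ← conjSqrt_inverse_eq_rpow_mul_rpow hN, mpow_eq_rpow hm.nonneg,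
    mpow_eq_rpow hn.nonneg]

lemma concaveOn_mpow_persp2 {p lam r : ℝ} (hp : p ∈ Ioc (0 : ℝ) 1) (hlam : lam ∈ Icc (0 : ℝ) 1)
    (hr : r ∈ Icc (0 : ℝ) 1) :
    ConcaveOn ℝ ({M : Matrix (Fin n) (Fin n) ℂ | M.PosDef} ×ˢ {N | N.PosDef})
      fun x => mpow (persp2 lam p x.1 x.2) r := by
  simp only [← isStrictlyPositive_iff_posDef]
  refine (stmt16_general hp hlam hr).congr fun x hx => ?_
  beta_reduce
  rw [persp2_eq_powerMean hlam p hx.1 hx.2,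
    mpow_eq_rpow (isStrictlyPositive_powerMean hlam p hx.1 hx.2).nonneg]

end MatrixPower

theorem stmt16 {n : ℕ} (p lam : ℝ) (hp0 : 0 < p) (hp1 : p ≤ 1)
    (hl0 : 0 ≤ lam) (hl1 : lam ≤ 1)
    (A₁ A₂ B₁ B₂ : Matrix (Fin n) (Fin n) ℂ)
    (hA₁ : A₁.PosDef) (hA₂ : A₂.PosDef) (hB₁ : B₁.PosDef) (hB₂ : B₂.PosDef)
    (α : ℝ) (hα0 : 0 ≤ α) (hα1 : α ≤ 1) :
    (mpow (persp2 lam p (α • A₁ + (1 - α) • A₂) (α • B₁ + (1 - α) • B₂)) (1 - p) -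
      (α • mpow (persp2 lam p A₁ B₁) (1 - p) +
        (1 - α) • mpow (persp2 lam p A₂ B₂) (1 - p))).PosSemidef :=
  Matrix.le_iff.1 <| (concaveOn_mpow_persp2 ⟨hp0, hp1⟩ ⟨hl0, hl1⟩
    ⟨sub_nonneg.2 hp1, sub_le_self 1 hp0.le⟩).2 (x := (A₁, B₁)) (y := (A₂, B₂))
    ⟨hA₁, hB₁⟩ ⟨hA₂, hB₂⟩ hα0 (sub_nonneg.2 hα1) (add_sub_cancel α 1)
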